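/- arXiv:1912.10323 — 5 statements merged into one kernel-verified Lean document; each statement's English description precedes it below -/
import Mathlib

section
/- Let T' = (t'_k) and T⋆ = (t⋆_k) be admissible event sequences satisfying the asynchrony bounds with parameters τ', τ⋆, τ°, τ♮, and let Δ be the associated asynchronous sample-and-hold perturbation operator. Then for every v ∈ L²([0,∞)), the function Δv is in L²([0,∞)) and ‖Δv‖ ≤ (2(τ' + τ°)/π + √((τ' + τ°)τ♮)) ‖v‖. -/
/-!
Write `L = τ' + τ°`, `α = 2L/π`, `β = √(Lτ♮)`. The held index `q(t)` equals `k` exactly on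
`[φ_k, φ_{k+1})` (`le_qIdx_iff`, `idx_eq_of_mem`), and these intervals, many of them possibly
empty, partition `[0, ∞)`. A nonempty one has length at most `L`, and satisfies
`t'_k ≤ φ_k < t'_{k+1}` and `φ_k - t'_k ≤ τ♮`. On it, split
`Δv(t) = ∫_{φ_k}^t v + ∫_{t'_k}^{φ_k} v`.

* The first term is bounded in `L²` by `α` times the norm of `v` on `[φ_k, φ_{k+1})`: this is the
  Wirtinger inequality with one free endpoint (`wirtinger`), which follows from Cauchy-Schwarz with
  a cosine weight (`sq_integral_le`) and Tonelli's theorem.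
* The second term is constant, and Cauchy-Schwarz with weight `1` bounds its `L²` norm by `β` times
  the norm of `v` on `[t'_k, t'_{k+1})`.

The weighted inequality `sq_add_le` combines the two on each interval with exactly the weights for
which summing over `k` (`lintegral_Ici_eq_tsum`, for both partitions `φ` and `t'`) yields
`‖Δv‖² ≤ (α + β)(α‖v‖² + β‖v‖²) = (α + β)²‖v‖²`, so no separate Minkowski inequality is needed.
-/

open MeasureTheory Filter Set

/-- An admissible event sequence: `T 0 = 0`, strictly increasing, tending to `+∞`. -/
def Admissible (T : ℕ → ℝ) : Prop :=
  T 0 = 0 ∧ (∀ k, T k < T (k + 1)) ∧ Tendsto T atTop atTop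

/-- `lastIdx T t = max {k | T k ≤ t}`. -/
noncomputable def lastIdx (T : ℕ → ℝ) (t : ℝ) : ℕ := sSup {k | T k ≤ t}

/-- `q(t) = p(t⋆_{n(t)})`: index of the sample held at the most recent hold update. -/
noncomputable def qIdx (Tp Ts : ℕ → ℝ) (t : ℝ) : ℕ := lastIdx Tp (Ts (lastIdx Ts t))

/-- `φ_k = min {t⋆_j | t⋆_j ≥ t'_k}`, the first hold update at or after sample `k`. -/
noncomputable def phi (Tp Ts : ℕ → ℝ) (k : ℕ) : ℝ := Ts (sInf {j | Tp k ≤ Ts j})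

/-- The asynchrony bounds (3) on the sample sequence `Tp = T'` and update sequence
`Ts = T⋆`, with parameters `τ' > 0`, `τ⋆ > 0`, `τ° ∈ [0,τ⋆]`, `τ♮ ∈ [0, min τ° τ']`. -/
def AsyncBounds (Tp Ts : ℕ → ℝ) (τp τs τc τn : ℝ) : Prop :=
  0 < τp ∧ 0 < τs ∧ 0 ≤ τc ∧ τc ≤ τs ∧ 0 ≤ τn ∧ τn ≤ min τc τp ∧
  (∀ k, Tp (k + 1) - Tp k ≤ τp) ∧
  (∀ k, Ts (k + 1) - Ts k ≤ τs) ∧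
  (∀ k, phi Tp Ts k - Tp k ≤ τc) ∧
  (∀ k, phi Tp Ts k - Tp (lastIdx Tp (phi Tp Ts k)) ≤ τn)

/-- The asynchronous sample-and-hold perturbation `(Δ v)(t) = ∫_{t'_{q(t)}}^{t} v(x) dx`. -/
noncomputable def Delta (Tp Ts : ℕ → ℝ) (v : ℝ → ℝ) (t : ℝ) : ℝ :=
  ∫ x in (Tp (qIdx Tp Ts t))..t, v x

/-! ### Integral inequalities on an interval -/

/-- Cauchy-Schwarz with a positive weight `g`, by integrating `(u - (I/A) g)² / g ≥ 0` with
`I = ∫ u` and `A = ∫ g`. -/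
theorem sq_integral_le {u g : ℝ → ℝ} {a t : ℝ} (hat : a ≤ t)
    (hu : IntervalIntegrable u volume a t)
    (hu2 : IntervalIntegrable (fun x => u x ^ 2 / g x) volume a t)
    (hg : ContinuousOn g (Icc a t)) (hpos : ∀ x ∈ Icc a t, 0 < g x) :
    (∫ x in a..t, u x) ^ 2 ≤ (∫ x in a..t, g x) * ∫ x in a..t, u x ^ 2 / g x := by
  rcases hat.eq_or_lt with rfl | hlt
  · simp
  have hgi : IntervalIntegrable g volume a t := by
    apply ContinuousOn.intervalIntegrable; rwa [uIcc_of_le hat]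
  have hA : 0 < ∫ x in a..t, g x :=
    intervalIntegral.intervalIntegral_pos_of_pos_on hgi
      (fun x hx => hpos x (Ioo_subset_Icc_self hx)) hlt
  set A := ∫ x in a..t, g x with hAdef
  set I := ∫ x in a..t, u x with hI
  have h0 : 0 ≤ ∫ x in a..t, (u x ^ 2 / g x - 2 * (I / A) * u x + (I / A) ^ 2 * g x) := by
    apply intervalIntegral.integral_nonneg hat
    intro x hx
    have := hpos x hx
    have e : u x ^ 2 / g x - 2 * (I / A) * u x + (I / A) ^ 2 * g x
        = (u x - I / A * g x) ^ 2 / g x := by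
      field_simp
      ring
    rw [e]; positivity
  rw [intervalIntegral.integral_add (hu2.sub (hu.const_mul _)) (hgi.const_mul _),
    intervalIntegral.integral_sub hu2 (hu.const_mul _),
    intervalIntegral.integral_const_mul, intervalIntegral.integral_const_mul,
    ← hAdef, ← hI] at h0
  have e : I ^ 2 = A * (2 * (I / A) * I - (I / A) ^ 2 * A) := by
    field_simp
    ring
  rw [e]
  exact mul_le_mul_of_nonneg_left (by linarith) hA.le

/-- Wirtinger's inequality for the primitive of `u` vanishing at `a`, on an interval of length at
most `L`. With the weight `g x = cos ((x - a) / c)`, `c = 2L/π`, the primitive of `g` is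
`c sin ((t - a) / c)`, whose integral over `[x, b]` is at most `c² g x`. -/
theorem wirtinger {u : ℝ → ℝ} (hu : Measurable u) (hu2 : Integrable (fun x => u x ^ 2))
    (hloc : ∀ a b, IntervalIntegrable u volume a b)
    {a b L : ℝ} (hL : 0 < L) (hbL : b ≤ a + L) :
    ∫⁻ t in Ico a b, ENNReal.ofReal ((∫ x in a..t, u x) ^ 2) ≤
      ENNReal.ofReal ((2 * L / Real.pi) ^ 2) * ∫⁻ x in Ico a b, ENNReal.ofReal (u x ^ 2) := by
  have hpi := Real.pi_pos
  set c := 2 * L / Real.pi with hc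
  have hc0 : 0 < c := by positivity
  have hcL : L / c = Real.pi / 2 := by rw [hc]; field_simp
  have hrange : ∀ x ∈ Ico a b, 0 ≤ (x - a) / c ∧ (x - a) / c < Real.pi / 2 := by
    intro x hx
    refine ⟨div_nonneg (by linarith [hx.1]) hc0.le, ?_⟩
    rw [← hcL]
    exact div_lt_div_of_pos_right (by linarith [hx.2]) hc0
  have hgpos : ∀ x ∈ Ico a b, 0 < Real.cos ((x - a) / c) := fun x hx =>
    Real.cos_pos_of_mem_Ioo ⟨by linarith [(hrange x hx).1], (hrange x hx).2⟩
  have hspos : ∀ x ∈ Ico a b, 0 ≤ Real.sin ((x - a) / c) := fun x hx =>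
    Real.sin_nonneg_of_nonneg_of_le_pi (hrange x hx).1 (by linarith [(hrange x hx).2])
  have hg : Continuous (fun x => Real.cos ((x - a) / c)) := by fun_prop
  have hs : Continuous (fun x => c * Real.sin ((x - a) / c)) := by fun_prop
  have hcos : ∀ x y, ∫ z in x..y, Real.cos ((z - a) / c)
      = c * Real.sin ((y - a) / c) - c * Real.sin ((x - a) / c) := by
    intro x y
    apply intervalIntegral.integral_eq_sub_of_hasDerivAt (f := fun z => c * Real.sin ((z - a) / c))
    · intro z _
      have h : HasDerivAt (fun z => c * Real.sin ((z - a) / c)) _ z :=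
        ((((hasDerivAt_id' z).sub_const a).div_const c).sin).const_mul c
      refine h.congr_deriv ?_
      field_simp
    · exact hg.intervalIntegrable _ _
  have hsin : ∀ x y, ∫ z in x..y, c * Real.sin ((z - a) / c)
      = c ^ 2 * Real.cos ((x - a) / c) - c ^ 2 * Real.cos ((y - a) / c) := by
    intro x y
    rw [intervalIntegral.integral_eq_sub_of_hasDerivAt
      (f := fun z => - (c ^ 2 * Real.cos ((z - a) / c)))]
    · ring
    · intro z _
      have h : HasDerivAt (fun z => -(c ^ 2 * Real.cos ((z - a) / c))) _ z :=
        (((((hasDerivAt_id' z).sub_const a).div_const c).cos).const_mul (c ^ 2)).neg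
      refine h.congr_deriv ?_
      field_simp
    · exact hs.intervalIntegrable _ _
  set h : ℝ → ENNReal := fun x => ENNReal.ofReal (u x ^ 2 / Real.cos ((x - a) / c)) with hh
  have hhm : Measurable h := by fun_prop
  set S : ℝ → ENNReal := fun t => ENNReal.ofReal (c * Real.sin ((t - a) / c)) with hS
  have hSm : Measurable S := by fun_prop
  -- Cauchy-Schwarz at each `t < b`, where the weight is bounded away from zero on `[a, t]`.
  have step1 : ∀ t ∈ Ico a b, ENNReal.ofReal ((∫ x in a..t, u x) ^ 2) ≤
      ∫⁻ x in Ico a b, (Iic t).indicator (fun x => S t * h x) x := by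
    intro t ht
    have hsub : ∀ x ∈ Icc a t, x ∈ Ico a b := fun x hx => ⟨hx.1, hx.2.trans_lt ht.2⟩
    have hi : IntegrableOn (fun x => u x ^ 2 / Real.cos ((x - a) / c)) (Icc a t) := by
      have hcont : ContinuousOn (fun x => (Real.cos ((x - a) / c))⁻¹) (Icc a t) :=
        hg.continuousOn.inv₀ (fun x hx => (hgpos x (hsub x hx)).ne')
      simpa [div_eq_mul_inv] using
        (hu2.integrableOn (s := Icc a t)).mul_continuousOn hcont isCompact_Icc
    have hii : IntervalIntegrable (fun x => u x ^ 2 / Real.cos ((x - a) / c)) volume a t := by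
      rw [intervalIntegrable_iff_integrableOn_Icc_of_le ht.1]; exact hi
    have key := sq_integral_le ht.1 (hloc a t) hii hg.continuousOn
      (fun x hx => hgpos x (hsub x hx))
    rw [hcos] at key
    simp only [sub_self, zero_div, Real.sin_zero, mul_zero, sub_zero] at key
    refine (ENNReal.ofReal_le_ofReal key).trans ?_
    rw [ENNReal.ofReal_mul (mul_nonneg hc0.le (hspos t ht)),
      intervalIntegral.integral_of_le ht.1, ← integral_Icc_eq_integral_Ioc,
      ofReal_integral_eq_lintegral_ofReal hi, ← lintegral_const_mul _ hhm,
      setLIntegral_indicator measurableSet_Iic]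
    · exact lintegral_mono_set fun x hx => ⟨hx.2, hsub x hx⟩
    · refine (ae_restrict_mem measurableSet_Icc).mono fun x hx => ?_
      have := hgpos x (hsub x hx)
      simp only [Pi.zero_apply]
      positivity
  -- The inner integral after exchanging the order of integration over `a ≤ x ≤ t < b`.
  have step2 : ∀ x ∈ Ico a b, ∫⁻ t in Ico a b, (Ici x).indicator (fun t => S t * h x) t ≤
      ENNReal.ofReal (c ^ 2) * ENNReal.ofReal (u x ^ 2) := by
    intro x hx
    have hgx := hgpos x hx
    have hsub : ∀ t ∈ Ico x b, t ∈ Ico a b := fun t ht => ⟨hx.1.trans ht.1, ht.2⟩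
    have hset : Ici x ∩ Ico a b = Ico x b := by
      ext t; simp only [mem_inter_iff, mem_Ici, mem_Ico]
      exact ⟨fun h => ⟨h.1, h.2.2⟩, fun h => ⟨h.1, hx.1.trans h.1, h.2⟩⟩
    have hcb : 0 ≤ Real.cos ((b - a) / c) := by
      apply Real.cos_nonneg_of_mem_Icc
      have h1 : 0 ≤ (b - a) / c := div_nonneg (by linarith [hx.1, hx.2]) hc0.le
      refine ⟨by linarith, ?_⟩
      rw [← hcL]
      exact div_le_div_of_nonneg_right (by linarith) hc0.le
    rw [setLIntegral_indicator measurableSet_Ici, hset, lintegral_mul_const _ hSm,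
      ← ofReal_integral_eq_lintegral_ofReal, integral_Ico_eq_integral_Ioc,
      ← intervalIntegral.integral_of_le hx.2.le, hsin]
    · rw [← ENNReal.ofReal_mul' (by positivity), ← ENNReal.ofReal_mul (by positivity)]
      apply ENNReal.ofReal_le_ofReal
      calc _ ≤ c ^ 2 * Real.cos ((x - a) / c) * (u x ^ 2 / Real.cos ((x - a) / c)) := by
            apply mul_le_mul_of_nonneg_right _ (by positivity)
            nlinarith [mul_nonneg (sq_nonneg c) hcb]
        _ = c ^ 2 * u x ^ 2 := by field_simp
    · exact (hs.integrableOn_Icc (a := x) (b := b)).mono_set Ico_subset_Icc_self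
    · refine (ae_restrict_mem measurableSet_Ico).mono fun t ht => ?_
      exact mul_nonneg hc0.le (hspos t (hsub t ht))
  calc _ ≤ ∫⁻ t in Ico a b, ∫⁻ x in Ico a b, (Iic t).indicator (fun x => S t * h x) x :=
        setLIntegral_mono' measurableSet_Ico step1
    _ = ∫⁻ x in Ico a b, ∫⁻ t in Ico a b, (Iic t).indicator (fun x => S t * h x) x := by
        apply lintegral_lintegral_swap
        have : (Function.uncurry fun t x => (Iic t).indicator (fun x => S t * h x) x)
            = {p : ℝ × ℝ | p.2 ≤ p.1}.indicator (fun p => S p.1 * h p.2) := by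
          ext ⟨t, x⟩; simp [indicator]
        rw [this]
        exact (Measurable.indicator (by fun_prop)
          (measurableSet_le measurable_snd measurable_fst)).aemeasurable
    _ ≤ ∫⁻ x in Ico a b, ENNReal.ofReal (c ^ 2) * ENNReal.ofReal (u x ^ 2) := by
        apply setLIntegral_mono' measurableSet_Ico
        intro x hx
        refine le_trans (le_of_eq ?_) (step2 x hx)
        congr 1
    _ = _ := lintegral_const_mul _ (by fun_prop)

/-! ### Event sequences and the partitions they induce -/

theorem Admissible.strictMono {T : ℕ → ℝ} (hT : Admissible T) : StrictMono T :=
  strictMono_nat_of_lt_succ hT.2.1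

theorem Admissible.nonneg {T : ℕ → ℝ} (hT : Admissible T) (k : ℕ) : 0 ≤ T k :=
  hT.1 ▸ hT.strictMono.monotone (Nat.zero_le k)

/-- For `t ≥ 0` the supremum defining `lastIdx` is an attained maximum, and `k ↦ T k` and
`t ↦ lastIdx T t` form a Galois connection. -/
theorem le_lastIdx_iff {T : ℕ → ℝ} (hT : Admissible T) {t : ℝ} (ht : 0 ≤ t) (k : ℕ) :
    k ≤ lastIdx T t ↔ T k ≤ t := by
  have hbdd : BddAbove {k | T k ≤ t} := by
    obtain ⟨N, hN⟩ := (hT.2.2.eventually_gt_atTop t).exists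
    exact ⟨N, fun k hk => (hT.strictMono.lt_iff_lt.1 (lt_of_le_of_lt hk hN)).le⟩
  have hne : {k | T k ≤ t}.Nonempty := ⟨0, by simpa [hT.1] using ht⟩
  have hmem : T (lastIdx T t) ≤ t := Nat.sSup_mem hne hbdd
  exact ⟨fun h => (hT.strictMono.monotone h).trans hmem, fun h => le_csSup hbdd h⟩

theorem le_phi {Tp Ts : ℕ → ℝ} (hTs : Admissible Ts) (k : ℕ) : Tp k ≤ phi Tp Ts k :=
  Nat.sInf_mem (s := {j | Tp k ≤ Ts j}) (hTs.2.2.eventually_ge_atTop (Tp k)).exists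

theorem phi_le {Tp Ts : ℕ → ℝ} (hTs : Admissible Ts) {k j : ℕ} (h : Tp k ≤ Ts j) :
    phi Tp Ts k ≤ Ts j :=
  hTs.strictMono.monotone (Nat.sInf_le h)

/-- The held index satisfies the same adjunction with `φ` that `lastIdx` satisfies with `T`: sample
`k` or a later one is held at time `t` iff the first update at or after `t'_k` has occurred. -/
theorem le_qIdx_iff {Tp Ts : ℕ → ℝ} (hTp : Admissible Tp) (hTs : Admissible Ts)
    {t : ℝ} (ht : 0 ≤ t) (k : ℕ) : k ≤ qIdx Tp Ts t ↔ phi Tp Ts k ≤ t := by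
  rw [qIdx, le_lastIdx_iff hTp (hTs.nonneg _)]
  constructor
  · exact fun h => (phi_le hTs h).trans ((le_lastIdx_iff hTs ht _).1 le_rfl)
  · intro h
    exact (le_phi hTs k).trans
      (hTs.strictMono.monotone ((le_lastIdx_iff hTs ht _).2 h))

/-- If `N` is adjoint to the sequence `c`, then `N` has the value `k` on `[c k, c (k + 1))`. Applied
to `lastIdx` and `Tp`, and to `qIdx` and `phi`. -/
theorem idx_eq_of_mem {c : ℕ → ℝ} {N : ℝ → ℕ} (hc : ∀ k, 0 ≤ c k)
    (hN : ∀ t, 0 ≤ t → ∀ k, k ≤ N t ↔ c k ≤ t) {k : ℕ} {t : ℝ}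
    (ht : t ∈ Ico (c k) (c (k + 1))) : N t = k := by
  have h0 := (hc k).trans ht.1
  have h1 := (hN t h0 k).2 ht.1
  have h2 : ¬ (k + 1 ≤ N t) := fun h => absurd ((hN t h0 _).1 h) (not_le.2 ht.2)
  omega

theorem iUnion_Ico_eq {c : ℕ → ℝ} {N : ℝ → ℕ} (hc : ∀ k, 0 ≤ c k)
    (hN : ∀ t, 0 ≤ t → ∀ k, k ≤ N t ↔ c k ≤ t) :
    ⋃ k, Ico (c k) (c (k + 1)) = Ici 0 := by
  ext t
  simp only [mem_iUnion, mem_Ici]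
  constructor
  · rintro ⟨k, hk⟩
    exact (hc k).trans hk.1
  · intro ht
    refine ⟨N t, (hN t ht _).1 le_rfl, ?_⟩
    by_contra h
    have := (hN t ht _).2 (not_lt.1 h)
    omega

/-- Some of the intervals may be empty, as happens for `c = phi Tp Ts` when no update separates two
samples. -/
theorem lintegral_Ici_eq_tsum {c : ℕ → ℝ} {N : ℝ → ℕ} (hc : ∀ k, 0 ≤ c k)
    (hN : ∀ t, 0 ≤ t → ∀ k, k ≤ N t ↔ c k ≤ t) (f : ℝ → ENNReal) :
    ∫⁻ t in Ici 0, f t = ∑' k, ∫⁻ t in Ico (c k) (c (k + 1)), f t := by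
  rw [← iUnion_Ico_eq hc hN]
  refine lintegral_iUnion (fun _ => measurableSet_Ico) ?_ f
  intro i j hij
  refine Set.disjoint_left.2 fun t hi hj => hij ?_
  rw [← idx_eq_of_mem hc hN hi, idx_eq_of_mem hc hN hj]

/-! ### The estimate on one hold interval -/

/-- Division-free in `β`, so that `β = 0` (the case `τ♮ = 0`, where `c = 0`) is included. -/
theorem sq_add_le {α β J w c : ℝ} (hα : 0 < α) (hβ : 0 ≤ β) (hJ : 0 ≤ J)
    (hc : c ^ 2 ≤ β ^ 2 * J) : (w + c) ^ 2 ≤ (α + β) * (1 / α * w ^ 2 + β * J) := by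
  have hsq := Real.sq_sqrt hJ
  set r := Real.sqrt J
  have hr : 0 ≤ r := Real.sqrt_nonneg J
  have hc' : |c| ≤ β * r := by
    refine abs_le_of_sq_le_sq ?_ (mul_nonneg hβ hr)
    rw [mul_pow, hsq]; exact hc
  have h1 : w * c ≤ |w| * (β * r) := by
    calc w * c ≤ |w * c| := le_abs_self _
      _ = |w| * |c| := abs_mul _ _
      _ ≤ _ := mul_le_mul_of_nonneg_left hc' (abs_nonneg _)
  have h2 : 2 * (|w| * r) ≤ 1 / α * w ^ 2 + α * J := by
    have : 1 / α * w ^ 2 + α * J - 2 * (|w| * r) = (|w| - α * r) ^ 2 / α := by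
      rw [← hsq, ← sq_abs w]; field_simp; ring
    have : 0 ≤ (|w| - α * r) ^ 2 / α := by positivity
    linarith
  have h3 := mul_le_mul_of_nonneg_left h2 hβ
  have e : (α + β) * (1 / α * w ^ 2 + β * J)
      = w ^ 2 + β * (1 / α * w ^ 2 + α * J) + β ^ 2 * J := by
    field_simp; ring
  rw [e]
  nlinarith

/-- The bound on one hold interval `[a, b)`, with `s` and `s'` the sample held on it and the next
sample in time. -/
theorem local_bound {u : ℝ → ℝ} (hu : Measurable u) (hu2 : Integrable (fun x => u x ^ 2))
    (hloc : ∀ a b, IntervalIntegrable u volume a b)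
    {s s' a b L τ : ℝ} (hL : 0 < L) (hsa : s ≤ a) (has : a ≤ s') (haτ : a - s ≤ τ)
    (hbL : b ≤ a + L) :
    ∫⁻ t in Ico a b, ENNReal.ofReal ((∫ x in s..t, u x) ^ 2) ≤
      ENNReal.ofReal (2 * L / Real.pi + Real.sqrt (L * τ)) *
        (ENNReal.ofReal (2 * L / Real.pi) * (∫⁻ x in Ico a b, ENNReal.ofReal (u x ^ 2)) +
          ENNReal.ofReal (Real.sqrt (L * τ)) * ∫⁻ x in Ico s s', ENNReal.ofReal (u x ^ 2)) := by
  have hτ : 0 ≤ τ := by linarith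
  have hpi := Real.pi_pos
  have hα : 0 < 2 * L / Real.pi := by positivity
  have hβ := Real.sqrt_nonneg (L * τ)
  have hββ : Real.sqrt (L * τ) ^ 2 = L * τ := Real.sq_sqrt (by positivity)
  have hW := wirtinger hu hu2 hloc (b := b) hL hbL
  set α := 2 * L / Real.pi
  set β := Real.sqrt (L * τ)
  set J := ∫ x in s..a, u x ^ 2 with hJ
  have hJ0 : 0 ≤ J := intervalIntegral.integral_nonneg hsa fun x _ => sq_nonneg _
  have hc : (∫ x in s..a, u x) ^ 2 ≤ β ^ 2 * (J / L) := by
    have h := sq_integral_le (g := fun _ => (1 : ℝ)) hsa (hloc s a)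
      (by simpa using hu2.intervalIntegrable) continuousOn_const (fun _ _ => zero_lt_one)
    simp only [div_one, intervalIntegral.integral_const, smul_eq_mul, mul_one] at h
    rw [hββ]
    calc _ ≤ (a - s) * J := h
      _ ≤ τ * J := mul_le_mul_of_nonneg_right haτ hJ0
      _ = _ := by field_simp
  have hJle : ENNReal.ofReal J ≤ ∫⁻ x in Ico s s', ENNReal.ofReal (u x ^ 2) := by
    rw [hJ, intervalIntegral.integral_of_le hsa, ← integral_Ico_eq_integral_Ioc,
      ofReal_integral_eq_lintegral_ofReal hu2.integrableOn
        (Eventually.of_forall fun x => sq_nonneg _)]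
    exact lintegral_mono_set (Ico_subset_Ico_right has)
  have hprim : Measurable fun t => ∫ x in a..t, u x :=
    (intervalIntegral.continuous_primitive hloc a).measurable
  have hpt : ∀ t, ENNReal.ofReal ((∫ x in s..t, u x) ^ 2) ≤ ENNReal.ofReal (α + β) *
      (ENNReal.ofReal (1 / α) * ENNReal.ofReal ((∫ x in a..t, u x) ^ 2) +
        ENNReal.ofReal (β * (J / L))) := by
    intro t
    rw [← ENNReal.ofReal_mul (by positivity), ← ENNReal.ofReal_add (by positivity) (by positivity),
      ← ENNReal.ofReal_mul (by positivity),
      ← intervalIntegral.integral_add_adjacent_intervals (hloc s a) (hloc a t),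
      add_comm (∫ x in s..a, u x)]
    exact ENNReal.ofReal_le_ofReal (sq_add_le hα hβ (by positivity) hc)
  calc _ ≤ ∫⁻ t in Ico a b, ENNReal.ofReal (α + β) *
      (ENNReal.ofReal (1 / α) * ENNReal.ofReal ((∫ x in a..t, u x) ^ 2) +
        ENNReal.ofReal (β * (J / L))) := lintegral_mono hpt
    _ = ENNReal.ofReal (α + β) * (ENNReal.ofReal (1 / α) *
          (∫⁻ t in Ico a b, ENNReal.ofReal ((∫ x in a..t, u x) ^ 2)) +
          ENNReal.ofReal (β * (J / L)) * ENNReal.ofReal (b - a)) := by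
        rw [lintegral_const_mul _ (by fun_prop), lintegral_add_right _ measurable_const,
          lintegral_const_mul _ (by fun_prop), setLIntegral_const, Real.volume_Ico]
    _ ≤ _ := by
        gcongr ENNReal.ofReal (α + β) * (?_ + ?_)
        · calc _ ≤ ENNReal.ofReal (1 / α) * (ENNReal.ofReal (α ^ 2) * _) :=
                mul_le_mul_right hW _
            _ = _ := by
                rw [← mul_assoc, ← ENNReal.ofReal_mul (by positivity)]
                congr 2
                field_simp
        · calc _ ≤ ENNReal.ofReal (β * (J / L)) * ENNReal.ofReal L :=
                mul_le_mul_right (ENNReal.ofReal_le_ofReal (by linarith)) _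
            _ = ENNReal.ofReal β * ENNReal.ofReal J := by
                rw [← ENNReal.ofReal_mul (by positivity), ← ENNReal.ofReal_mul (by positivity)]
                congr 1
                field_simp
            _ ≤ _ := mul_le_mul_right hJle _

/-! ### Summation over the hold intervals -/

/-- Bounded gain: for `v ∈ L²([0,∞))`, `Δv ∈ L²` and
`‖Δv‖ ≤ (2(τ'+τ°)/π + √((τ'+τ°)τ♮)) ‖v‖`. -/
theorem stmt3 (Tp Ts : ℕ → ℝ) (hTp : Admissible Tp) (hTs : Admissible Ts)
    (τp τs τc τn : ℝ) (hb : AsyncBounds Tp Ts τp τs τc τn)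
    (v : ℝ → ℝ) (hv : Measurable v)
    (hv2 : IntegrableOn (fun x => v x ^ 2) (Set.Ioi 0)) :
    IntegrableOn (fun t => Delta Tp Ts v t ^ 2) (Set.Ioi 0) ∧
    Real.sqrt (∫ t in Set.Ioi (0 : ℝ), Delta Tp Ts v t ^ 2) ≤
      (2 * (τp + τc) / Real.pi + Real.sqrt ((τp + τc) * τn)) *
        Real.sqrt (∫ x in Set.Ioi (0 : ℝ), v x ^ 2) := by
  obtain ⟨hp, -, hc, -, hn, -, hTpd, -, hphi1, hphi2⟩ := hb
  have hL : 0 < τp + τc := by linarith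
  have hpi := Real.pi_pos
  -- `v` is arbitrary on the negative half-line, so it is cut off there first.
  set u : ℝ → ℝ := (Ioi 0).indicator v with hudef
  have hu : Measurable u := hv.indicator measurableSet_Ioi
  have husq : (fun x => u x ^ 2) = (Ioi 0).indicator fun x => v x ^ 2 := by
    ext x; by_cases hx : x ∈ Ioi (0 : ℝ) <;> simp [u, hx]
  have hu2 : Integrable (fun x => u x ^ 2) := by
    rw [husq, integrable_indicator_iff measurableSet_Ioi]; exact hv2
  have hloc : ∀ a b, IntervalIntegrable u volume a b := fun a b =>
    ((((memLp_two_iff_integrable_sq hu.aestronglyMeasurable).2 hu2).locallyIntegrable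
      (by norm_num)).integrableOn_isCompact isCompact_uIcc).intervalIntegrable
  have hphi0 : ∀ k, 0 ≤ phi Tp Ts k := fun k => (hTp.nonneg k).trans (le_phi hTs k)
  have hq : ∀ t, 0 ≤ t → ∀ k, k ≤ qIdx Tp Ts t ↔ phi Tp Ts k ≤ t :=
    fun t ht k => le_qIdx_iff hTp hTs ht k
  have hl : ∀ t, 0 ≤ t → ∀ k, k ≤ lastIdx Tp t ↔ Tp k ≤ t :=
    fun t ht k => le_lastIdx_iff hTp ht k
  have hD : ∀ k, ∀ t ∈ Ico (phi Tp Ts k) (phi Tp Ts (k + 1)),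
      Delta Tp Ts v t = ∫ x in (Tp k)..t, u x := by
    intro k t ht
    rw [Delta, idx_eq_of_mem hphi0 hq ht]
    have hkt : Tp k ≤ t := (le_phi hTs k).trans ht.1
    rw [intervalIntegral.integral_of_le hkt, intervalIntegral.integral_of_le hkt]
    refine setIntegral_congr_fun measurableSet_Ioc fun x hx => ?_
    have : x ∈ Ioi (0 : ℝ) := (hTp.nonneg k).trans_lt hx.1
    simp [u, this]
  set α := 2 * (τp + τc) / Real.pi with hα
  set β := Real.sqrt ((τp + τc) * τn) with hβ
  have hα0 : 0 ≤ α := by positivity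
  have hβ0 : 0 ≤ β := Real.sqrt_nonneg _
  have hk : ∀ k, ∫⁻ t in Ico (phi Tp Ts k) (phi Tp Ts (k + 1)),
        ENNReal.ofReal (Delta Tp Ts v t ^ 2) ≤
      ENNReal.ofReal (α + β) * (ENNReal.ofReal α *
          (∫⁻ x in Ico (phi Tp Ts k) (phi Tp Ts (k + 1)), ENNReal.ofReal (u x ^ 2)) +
        ENNReal.ofReal β * ∫⁻ x in Ico (Tp k) (Tp (k + 1)), ENNReal.ofReal (u x ^ 2)) := by
    intro k
    rw [setLIntegral_congr_fun (g := fun t => ENNReal.ofReal ((∫ x in (Tp k)..t, u x) ^ 2))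
      measurableSet_Ico (fun t ht => by simp only [hD k t ht])]
    -- The `τ♮` bound concerns the last sample before `φ_k`, which is `t'_k` only if the interval is
    -- nonempty.
    rcases le_or_gt (phi Tp Ts (k + 1)) (phi Tp Ts k) with hle | hlt
    · simp [Ico_eq_empty (not_lt.2 hle)]
    have hnext : phi Tp Ts k < Tp (k + 1) := by
      by_contra h
      exact absurd (phi_le hTs (not_lt.1 h)) (not_le.2 hlt)
    have hlast : lastIdx Tp (phi Tp Ts k) = k :=
      idx_eq_of_mem hTp.nonneg hl ⟨le_phi hTs k, hnext⟩
    have h2 := hphi2 k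
    rw [hlast] at h2
    exact local_bound hu hu2 hloc hL (le_phi hTs k) hnext.le h2
      (by linarith [hphi1 (k + 1), hTpd k, le_phi (Tp := Tp) hTs k])
  have hU : ∫⁻ x in Ici (0 : ℝ), ENNReal.ofReal (u x ^ 2)
      = ENNReal.ofReal (∫ x in Ioi (0 : ℝ), v x ^ 2) := by
    rw [setLIntegral_congr Ioi_ae_eq_Ici.symm, ofReal_integral_eq_lintegral_ofReal hv2
      (Eventually.of_forall fun x => sq_nonneg _)]
    refine setLIntegral_congr_fun measurableSet_Ioi fun x hx => ?_
    simp [u, mem_Ioi.1 hx]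
  have hV0 : 0 ≤ ∫ x in Ioi (0 : ℝ), v x ^ 2 := integral_nonneg fun x => sq_nonneg _
  have hmain : ∫⁻ t in Ioi (0 : ℝ), ENNReal.ofReal (Delta Tp Ts v t ^ 2) ≤
      ENNReal.ofReal ((α + β) ^ 2 * ∫ x in Ioi (0 : ℝ), v x ^ 2) := by
    rw [setLIntegral_congr Ioi_ae_eq_Ici, lintegral_Ici_eq_tsum hphi0 hq]
    refine (ENNReal.tsum_le_tsum hk).trans (le_of_eq ?_)
    rw [ENNReal.tsum_mul_left, ENNReal.tsum_add, ENNReal.tsum_mul_left, ENNReal.tsum_mul_left,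
      ← lintegral_Ici_eq_tsum hphi0 hq, ← lintegral_Ici_eq_tsum hTp.nonneg hl, hU, ← add_mul,
      ← ENNReal.ofReal_add hα0 hβ0, ← ENNReal.ofReal_mul (by positivity),
      ← ENNReal.ofReal_mul (by positivity)]
    congr 1
    ring
  have hmeas : AEStronglyMeasurable (fun t => Delta Tp Ts v t ^ 2)
      (volume.restrict (Ioi 0)) := by
    rw [Measure.restrict_congr_set Ioi_ae_eq_Ici, ← iUnion_Ico_eq hphi0 hq]
    refine AEStronglyMeasurable.iUnion fun k => ?_
    refine ((intervalIntegral.continuous_primitive hloc (Tp k)).pow 2).aestronglyMeasurable.congr ?_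
    filter_upwards [ae_restrict_mem measurableSet_Ico] with t ht
    rw [hD k t ht]
    rfl
  have hnn : 0 ≤ᵐ[volume.restrict (Ioi 0)] fun t => Delta Tp Ts v t ^ 2 :=
    Eventually.of_forall fun t => sq_nonneg _
  refine ⟨⟨hmeas, (hasFiniteIntegral_iff_ofReal hnn).2 (hmain.trans_lt ENNReal.ofReal_lt_top)⟩, ?_⟩
  rw [integral_eq_lintegral_of_nonneg_ae hnn hmeas]
  calc _ ≤ Real.sqrt ((α + β) ^ 2 * ∫ x in Ioi (0 : ℝ), v x ^ 2) :=
        Real.sqrt_le_sqrt (ENNReal.toReal_le_of_le_ofReal (by positivity) hmain)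
    _ = _ := by rw [Real.sqrt_mul (by positivity), Real.sqrt_sq (by positivity)]
end

section
/- (Half-interval Wirtinger inequality.) Let a < b be reals and let v : [a,b] → ℝ be measurable with ∫_a^b v(x)² dx < ∞. Define f(t) = ∫_a^t v(x) dx for t ∈ [a,b], so that f(a) = 0 and f is absolutely continuous with derivative v almost everywhere. Then ∫_a^b f(t)² dt ≤ (4(b − a)²/π²) ∫_a^b v(t)² dt. -/
/-! The inequality follows from a weighted Cauchy-Schwarz (Schur test) argument. Put
`w = π / (2 (b - a))`; the weight `cos (w (x - a))`, which is positive on `(a, b)`, comes from the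
extremal function `sin (w (t - a))` of the inequality. For `t ∈ (a, b)`,
`f(t)² ≤ (∫_a^t cos (w (x - a)) dx) * ∫_a^t v(x)² / cos (w (x - a)) dx`, where the first factor is
`sin (w (t - a)) / w`. Integrating in `t` and applying Tonelli, the weight multiplying
`v(x)² / cos (w (x - a))` becomes `∫_x^b sin (w (t - a)) / w dt = cos (w (x - a)) / w²`, because
`cos (w (b - a)) = 0`; the cosines cancel and the constant `1 / w² = 4 (b - a)² / π²` remains.
Everything is carried out with `[0, ∞]`-valued integrals: `v² / cos` need not be integrable up to
`b`, and no measurability of `f` has to be established. -/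

open MeasureTheory Set

open ENNReal in
/-- Cauchy-Schwarz for `u = φ ^ (1/2) * (u * φ ^ (-1/2))`. -/
lemma sq_lintegral_le_weighted {α : Type*} [MeasurableSpace α] (μ : Measure α)
    {u φ : α → ℝ≥0∞} (hu : Measurable u) (hφ : Measurable φ)
    (h0 : ∀ᵐ x ∂μ, φ x ≠ 0) (ht : ∀ x, φ x ≠ ∞) :
    (∫⁻ x, u x ∂μ) ^ 2 ≤ (∫⁻ x, φ x ∂μ) * ∫⁻ x, u x ^ 2 * (φ x)⁻¹ ∂μ := by
  have key := ENNReal.lintegral_mul_le_Lp_mul_Lq μ Real.HolderConjugate.two_two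
    (f := fun x => φ x ^ (1 / 2 : ℝ)) (g := fun x => u x * φ x ^ (-(1 / 2) : ℝ))
    (by fun_prop) (by fun_prop)
  have e1 : ∫⁻ x, u x ∂μ
      = ∫⁻ x, ((fun x => φ x ^ (1 / 2 : ℝ)) * fun x => u x * φ x ^ (-(1 / 2) : ℝ)) x ∂μ := by
    refine lintegral_congr_ae ?_
    filter_upwards [h0] with x hx
    have : φ x ^ (1 / 2 : ℝ) * φ x ^ (-(1 / 2) : ℝ) = 1 := by
      rw [← ENNReal.rpow_add _ _ hx (ht x)]; norm_num
    simp only [Pi.mul_apply]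
    rw [mul_left_comm, this, mul_one]
  have e2 : ∀ x, (φ x ^ (1 / 2 : ℝ)) ^ (2 : ℝ) = φ x := fun x => by
    rw [← ENNReal.rpow_mul]; norm_num
  have e3 : ∀ x, (u x * φ x ^ (-(1 / 2) : ℝ)) ^ (2 : ℝ) = u x ^ 2 * (φ x)⁻¹ := fun x => by
    rw [ENNReal.mul_rpow_of_nonneg _ _ (by norm_num), ← ENNReal.rpow_mul]
    norm_num [ENNReal.rpow_neg_one]
  simp only [e2, e3] at key
  rw [← e1] at key
  calc (∫⁻ x, u x ∂μ) ^ 2 ≤ _ := pow_le_pow_left' key 2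
    _ = _ := by
      have e4 : ∀ y : ℝ≥0∞, (y ^ (1 / 2 : ℝ)) ^ 2 = y := fun y => by
        rw [← ENNReal.rpow_natCast, ← ENNReal.rpow_mul]; norm_num
      rw [mul_pow, e4, e4]

lemma lintegral_Ioo_ofReal_eq {g : ℝ → ℝ} {c d : ℝ} (hcd : c ≤ d) (hg : Continuous g)
    (h0 : ∀ x ∈ Ioo c d, 0 ≤ g x) :
    ∫⁻ x in Ioo c d, ENNReal.ofReal (g x) = ENNReal.ofReal (∫ x in c..d, g x) := by
  rw [intervalIntegral.integral_of_le hcd, integral_Ioc_eq_integral_Ioo,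
    ofReal_integral_eq_lintegral_ofReal]
  · exact (hg.integrableOn_Icc (a := c) (b := d)).mono_set Ioo_subset_Icc_self
  · exact (ae_restrict_iff' measurableSet_Ioo).2 (Filter.Eventually.of_forall h0)

lemma integral_cos_affine {w : ℝ} (hw : w ≠ 0) (a t : ℝ) :
    ∫ x in a..t, Real.cos (w * (x - a)) = Real.sin (w * (t - a)) / w := by
  rw [intervalIntegral.integral_eq_sub_of_hasDerivAt
    (f := fun x => Real.sin (w * (x - a)) / w)]
  · simp
  · intro x _
    have := ((((hasDerivAt_id x).sub_const a).const_mul w).sin).div_const w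
    refine this.congr_deriv ?_
    simp only [id]
    field_simp
  · exact Continuous.intervalIntegrable (by fun_prop) _ _

lemma integral_sin_affine {w : ℝ} (hw : w ≠ 0) (a x b : ℝ) (hb : Real.cos (w * (b - a)) = 0) :
    ∫ t in x..b, Real.sin (w * (t - a)) / w = Real.cos (w * (x - a)) / w ^ 2 := by
  rw [intervalIntegral.integral_eq_sub_of_hasDerivAt
    (f := fun x => -Real.cos (w * (x - a)) / w ^ 2)]
  · simp [hb, neg_div]
  · intro x _
    have := ((((hasDerivAt_id x).sub_const a).const_mul w).cos).neg.div_const (w ^ 2)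
    refine this.congr_deriv ?_
    simp only [id]
    field_simp
  · exact Continuous.intervalIntegrable (by fun_prop) _ _

open ENNReal in
/-- The inequality for `[0, ∞]`-valued integrals, with `w` the frequency for which
`sin (w (t - a))` has a quarter period on `[a, b]`. -/
lemma lintegral_wirtinger {a b w : ℝ} (hw : 0 < w) (hwb : w * (b - a) = Real.pi / 2)
    {u : ℝ → ℝ≥0∞} (hu : Measurable u) :
    ∫⁻ t in Ioo a b, (∫⁻ x in Ioo a t, u x) ^ 2
      ≤ ENNReal.ofReal (1 / w ^ 2) * ∫⁻ x in Ioo a b, u x ^ 2 := by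
  set φ : ℝ → ℝ≥0∞ := fun x => ENNReal.ofReal (Real.cos (w * (x - a))) with hφdef
  set ψ : ℝ → ℝ≥0∞ := fun t => ENNReal.ofReal (Real.sin (w * (t - a)) / w) with hψdef
  have hφ : Measurable φ := by fun_prop
  have hψ : Measurable ψ := by fun_prop
  have hang : ∀ x ∈ Ioo a b, 0 < w * (x - a) ∧ w * (x - a) < Real.pi / 2 := fun x hx =>
    ⟨mul_pos hw (sub_pos.2 hx.1), by rw [← hwb]; gcongr; exact hx.2⟩
  have hcos : ∀ x ∈ Ioo a b, 0 < Real.cos (w * (x - a)) := fun x hx =>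
    Real.cos_pos_of_mem_Ioo ⟨by linarith [(hang x hx).1, Real.pi_pos], (hang x hx).2⟩
  have hsin : ∀ x ∈ Ioo a b, 0 ≤ Real.sin (w * (x - a)) / w := fun x hx =>
    div_nonneg (Real.sin_nonneg_of_nonneg_of_le_pi (hang x hx).1.le
      (by linarith [(hang x hx).2, Real.pi_pos])) hw.le
  have hφ0 : ∀ x ∈ Ioo a b, φ x ≠ 0 := fun x hx => (ENNReal.ofReal_pos.2 (hcos x hx)).ne'
  set k : ℝ → ℝ≥0∞ := fun x => u x ^ 2 * (φ x)⁻¹ with hk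
  have hkm : Measurable k := by fun_prop
  -- The Tonelli kernel, supported on `a < x < t < b`.
  set K : ℝ → ℝ → ℝ≥0∞ := fun t x => {p : ℝ × ℝ | p.2 < p.1}.indicator
    (fun p => ψ p.1 * k p.2) (t, x) with hK
  have hKm : Measurable (Function.uncurry K) :=
    Measurable.indicator (by fun_prop) (measurableSet_lt measurable_snd measurable_fst)
  calc ∫⁻ t in Ioo a b, (∫⁻ x in Ioo a t, u x) ^ 2
      ≤ ∫⁻ t in Ioo a b, ∫⁻ x in Ioo a b, K t x := by
        refine setLIntegral_mono' measurableSet_Ioo fun t ht => ?_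
        have hsub : Ioo a t ⊆ Ioo a b := Ioo_subset_Ioo_right ht.2.le
        refine (sq_lintegral_le_weighted (volume.restrict (Ioo a t)) hu hφ
          ((ae_restrict_iff' measurableSet_Ioo).2 (Filter.Eventually.of_forall
            fun x hx => hφ0 x (hsub hx))) fun x => ENNReal.ofReal_ne_top).trans ?_
        have h1 : ∫⁻ x in Ioo a t, φ x = ψ t := by
          rw [hφdef, lintegral_Ioo_ofReal_eq ht.1.le (by fun_prop)
            (fun x hx => (hcos x (hsub hx)).le), integral_cos_affine hw.ne']
        rw [h1, ← lintegral_const_mul _ hkm]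
        calc ∫⁻ x in Ioo a t, ψ t * k x = ∫⁻ x in Ioo a t, K t x :=
              setLIntegral_congr_fun measurableSet_Ioo fun x hx => by
                simp [hK, indicator, hx.2]
          _ ≤ _ := lintegral_mono_set hsub
    _ = ∫⁻ x in Ioo a b, ∫⁻ t in Ioo a b, K t x := lintegral_lintegral_swap hKm.aemeasurable
    _ = ∫⁻ x in Ioo a b, ENNReal.ofReal (1 / w ^ 2) * u x ^ 2 := by
        refine setLIntegral_congr_fun measurableSet_Ioo fun x hx => ?_
        have h1 : ∀ t, K t x = (Ioi x).indicator (fun t => ψ t * k x) t := fun t => by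
          simp [hK, indicator]
        have h2 : Ioi x ∩ Ioo a b = Ioo x b := by
          ext t; simp only [mem_inter_iff, mem_Ioi, mem_Ioo]
          exact ⟨fun h => ⟨h.1, h.2.2⟩, fun h => ⟨h.1, hx.1.trans h.1, h.2⟩⟩
        simp only [h1]
        rw [lintegral_indicator measurableSet_Ioi, Measure.restrict_restrict measurableSet_Ioi,
          h2, lintegral_mul_const _ hψ, hψdef, lintegral_Ioo_ofReal_eq hx.2.le (by fun_prop)
            (fun t ht => hsin t ⟨hx.1.trans ht.1, ht.2⟩),
          integral_sin_affine hw.ne' _ _ _ (by rw [hwb, Real.cos_pi_div_two]), hk,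
          div_eq_mul_one_div, ENNReal.ofReal_mul (hcos x hx).le]
        change φ x * _ * (u x ^ 2 * (φ x)⁻¹) = _
        calc _ = φ x * (φ x)⁻¹ * (ENNReal.ofReal (1 / w ^ 2) * u x ^ 2) := by ring
          _ = _ := by rw [ENNReal.mul_inv_cancel (hφ0 x hx) ENNReal.ofReal_ne_top, one_mul]
    _ = _ := lintegral_const_mul _ (by fun_prop)

/-- Half-interval Wirtinger inequality: if `f(t) = ∫_a^t v`, then
`∫_a^b f² ≤ (4(b-a)²/π²) ∫_a^b v²`. -/
theorem stmt4 (a b : ℝ) (hab : a < b) (v : ℝ → ℝ) (hv : Measurable v)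
    (hv2 : IntegrableOn (fun x => v x ^ 2) (Set.Icc a b)) :
    ∫ t in a..b, (∫ x in a..t, v x) ^ 2 ≤
      (4 * (b - a) ^ 2 / Real.pi ^ 2) * ∫ t in a..b, v t ^ 2 := by
  have hba : 0 < b - a := sub_pos.2 hab
  have hpi := Real.pi_pos
  have hw : 0 < Real.pi / (2 * (b - a)) := by positivity
  have hwb : Real.pi / (2 * (b - a)) * (b - a) = Real.pi / 2 := by field_simp
  have hc : 4 * (b - a) ^ 2 / Real.pi ^ 2 = 1 / (Real.pi / (2 * (b - a))) ^ 2 := by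
    field_simp; norm_num
  have main := lintegral_wirtinger hw hwb hv.enorm
  rw [← hc] at main
  have hv2' : IntegrableOn (fun x => v x ^ 2) (Ioo a b) := hv2.mono_set Ioo_subset_Icc_self
  have hR : ∫⁻ x in Ioo a b, ‖v x‖ₑ ^ 2 = ENNReal.ofReal (∫ x in Ioo a b, v x ^ 2) := by
    rw [ofReal_integral_eq_lintegral_ofReal hv2'
      (Filter.Eventually.of_forall fun x => sq_nonneg _)]
    refine lintegral_congr fun x => ?_
    rw [← enorm_pow, Real.enorm_of_nonneg (sq_nonneg _)]
  rw [hR, ← ENNReal.ofReal_mul (by positivity)] at main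
  simp only [intervalIntegral.integral_of_le hab.le, integral_Ioc_eq_integral_Ioo]
  have hpos : 0 ≤ ∫ x in Ioo a b, v x ^ 2 := integral_nonneg fun x => sq_nonneg _
  refine (ENNReal.ofReal_le_ofReal_iff (by positivity)).1 (le_trans ?_ main)
  rw [← Real.enorm_of_nonneg (integral_nonneg fun x => sq_nonneg _)]
  refine (enorm_integral_le_lintegral_enorm _).trans ?_
  refine setLIntegral_mono' measurableSet_Ioo fun t ht => ?_
  rw [enorm_pow, intervalIntegral.integral_of_le ht.1.le, integral_Ioc_eq_integral_Ioo]
  exact pow_le_pow_left' (enorm_integral_le_lintegral_enorm _) 2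
end

section
/- Let ψ : ℕ → ℝ be strictly increasing with ψ_0 = 0 and ψ_l → +∞, and suppose ψ_{l+1} − ψ_l ≤ h for all l, where h > 0. Let v : [0,∞) → ℝ be measurable with ∫_0^∞ v(x)² dx < ∞, and define u : [0,∞) → ℝ by u(t) = ∫_{ψ_l}^{t} v(x) dx for t ∈ [ψ_l, ψ_{l+1}), l ∈ ℕ. Then ∫_0^∞ u(t)² dt ≤ (2h/π)² ∫_0^∞ v(x)² dx. -/
/-!
The inequality follows from a weighted Cauchy–Schwarz estimate (Schur's test) on each cell
`[a, b)` with `b - a ≤ h`. Put `k = π / (2h)` and use the weight `w x = cos (k (x - a))`, which is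
positive on `[a, b)`. For `a < t < b`,
`(∫_a^t v)² ≤ (∫_a^t w) (∫_a^t v² / w) = k⁻¹ sin (k (t - a)) ∫_a^t v² / w`
(`sq_integral_le`). Integrating in `t`, exchanging the integrals by Tonelli, and using
`∫_x^b k⁻¹ sin (k (t - a)) dt ≤ k⁻² w x`, the weight cancels and `k⁻² ∫_a^b v²` remains
(`lintegral_cell_le`). Summing over the cells gives the claim; working with `∫⁻` makes the
summation and Tonelli's theorem free of integrability conditions.
-/

open MeasureTheory Filter Set

/-- Cauchy–Schwarz with weight `cos (k (x - a))`, whose integral over `[a, t]` is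
`sin (k (t - a)) / k`. -/
lemma sq_integral_le_s5 {a t k : ℝ} (hk : 0 < k) (hat : a < t)
    (hkt : k * (t - a) < Real.pi / 2) {v : ℝ → ℝ} (hv : Measurable v)
    (hv2 : IntegrableOn (fun x => v x ^ 2) (Ioc a t)) :
    ENNReal.ofReal ((∫ x in a..t, v x) ^ 2) ≤
      ENNReal.ofReal (Real.sin (k * (t - a)) / k) *
        ∫⁻ x in Ioc a t, ENNReal.ofReal (v x ^ 2 / Real.cos (k * (x - a))) := by
  have hpi := Real.pi_pos
  have hkta : 0 < k * (t - a) := mul_pos hk (sub_pos.2 hat)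
  have hc0 : 0 < Real.cos (k * (t - a)) :=
    Real.cos_pos_of_mem_Ioo ⟨by linarith, hkt⟩
  have hcle : ∀ x ∈ Ioc a t, Real.cos (k * (t - a)) ≤ Real.cos (k * (x - a)) := by
    intro x hx
    apply Real.cos_le_cos_of_nonneg_of_le_pi
    · exact mul_nonneg hk.le (by linarith [hx.1])
    · linarith
    · exact mul_le_mul_of_nonneg_left (by linarith [hx.2]) hk.le
  have hcpos : ∀ x ∈ Ioc a t, 0 < Real.cos (k * (x - a)) := fun x hx => hc0.trans_le (hcle x hx)
  have hwm : Measurable fun x : ℝ => Real.cos (k * (x - a)) := by fun_prop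
  have hvi : IntegrableOn v (Ioc a t) := by
    have : MemLp v 2 (volume.restrict (Ioc a t)) :=
      (memLp_two_iff_integrable_sq hv.aestronglyMeasurable).2 hv2
    exact this.integrable (by norm_num)
  have hwi : IntegrableOn (fun x : ℝ => Real.cos (k * (x - a))) (Ioc a t) :=
    (Continuous.integrableOn_Icc (by fun_prop)).mono_set Ioc_subset_Icc_self
  have hqi : IntegrableOn (fun x => v x ^ 2 / Real.cos (k * (x - a))) (Ioc a t) := by
    refine Integrable.mono' (hv2.div_const (Real.cos (k * (t - a))))
      ((hv.pow_const 2).div hwm).aestronglyMeasurable ?_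
    filter_upwards [ae_restrict_mem measurableSet_Ioc] with x hx
    rw [Real.norm_of_nonneg (div_nonneg (sq_nonneg _) (hcpos x hx).le)]
    exact div_le_div_of_nonneg_left (sq_nonneg _) hc0 (hcle x hx)
  have hA : ∫ x in Ioc a t, Real.cos (k * (x - a)) = Real.sin (k * (t - a)) / k := by
    rw [← intervalIntegral.integral_of_le hat.le,
      intervalIntegral.integral_eq_sub_of_hasDerivAt
        (f := fun x => Real.sin (k * (x - a)) / k)]
    · simp
    · intro x _
      have h1 : HasDerivAt (fun x : ℝ => k * (x - a)) k x := by
        simpa using ((hasDerivAt_id x).sub_const a).const_mul k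
      have h2 := h1.sin.div_const k
      rwa [mul_div_cancel_right₀ _ hk.ne'] at h2
    · exact Continuous.intervalIntegrable (by fun_prop) _ _
  have hApos : 0 < Real.sin (k * (t - a)) / k :=
    div_pos (Real.sin_pos_of_pos_of_lt_pi hkta (by linarith)) hk
  rw [← ofReal_integral_eq_lintegral_ofReal hqi ?_, ← ENNReal.ofReal_mul hApos.le]
  · apply ENNReal.ofReal_le_ofReal
    rw [intervalIntegral.integral_of_le hat.le]
    set A := Real.sin (k * (t - a)) / k
    set I := ∫ x in Ioc a t, v x
    set B := ∫ x in Ioc a t, v x ^ 2 / Real.cos (k * (x - a))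
    -- the minimizer of `s ↦ ∫ (v / √w - s √w)²`
    set s := I / A with hs
    have hpt : 0 ≤ ∫ x in Ioc a t, (v x ^ 2 / Real.cos (k * (x - a)) - 2 * s * v x
        + s ^ 2 * Real.cos (k * (x - a))) := by
      refine setIntegral_nonneg measurableSet_Ioc fun x hx => ?_
      have hc := hcpos x hx
      have : v x ^ 2 / Real.cos (k * (x - a)) - 2 * s * v x + s ^ 2 * Real.cos (k * (x - a))
          = (v x - s * Real.cos (k * (x - a))) ^ 2 / Real.cos (k * (x - a)) := by
        field_simp
        ring
      rw [this]
      positivity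
    have hexp : ∫ x in Ioc a t, (v x ^ 2 / Real.cos (k * (x - a)) - 2 * s * v x
        + s ^ 2 * Real.cos (k * (x - a))) = B - 2 * s * I + s ^ 2 * A := by
      have hd : IntegrableOn (fun x => v x ^ 2 / Real.cos (k * (x - a)) - 2 * s * v x)
          (Ioc a t) := hqi.sub (hvi.const_mul (2 * s))
      rw [integral_add hd (hwi.const_mul _), integral_sub hqi (hvi.const_mul _), integral_const_mul, integral_const_mul, hA]
    rw [hexp] at hpt
    have hsA : s * A = I := div_mul_cancel₀ _ hApos.ne'
    nlinarith [mul_nonneg hApos.le hpt]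
  · filter_upwards [ae_restrict_mem measurableSet_Ioc] with x hx
    exact div_nonneg (sq_nonneg _) (hcpos x hx).le

/-- The tail integral of the kernel; the upper endpoint contributes `-cos (k (b - a)) ≤ 0`. -/
lemma lintegral_sin_le {a b k x : ℝ} (hk : 0 < k) (hax : a ≤ x) (hxb : x ≤ b)
    (hkb : k * (b - a) ≤ Real.pi / 2) :
    ∫⁻ t in Icc x b, ENNReal.ofReal (Real.sin (k * (t - a)) / k) ≤
      ENNReal.ofReal (Real.cos (k * (x - a)) / k ^ 2) := by
  have hpi := Real.pi_pos
  have hi : IntegrableOn (fun t : ℝ => Real.sin (k * (t - a)) / k) (Icc x b) :=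
    Continuous.integrableOn_Icc (by fun_prop)
  rw [← ofReal_integral_eq_lintegral_ofReal hi ?_]
  · apply ENNReal.ofReal_le_ofReal
    rw [integral_Icc_eq_integral_Ioc, ← intervalIntegral.integral_of_le hxb,
      intervalIntegral.integral_eq_sub_of_hasDerivAt
        (f := fun x => -Real.cos (k * (x - a)) / k ^ 2)]
    · have : 0 ≤ Real.cos (k * (b - a)) / k ^ 2 := by
        refine div_nonneg (Real.cos_nonneg_of_mem_Icc ⟨?_, hkb⟩) (by positivity)
        nlinarith
      rw [neg_div, neg_div]
      linarith
    · intro y _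
      have h1 : HasDerivAt (fun x : ℝ => k * (x - a)) k y := by
        simpa using ((hasDerivAt_id y).sub_const a).const_mul k
      have h2 : Real.sin (k * (y - a)) / k = -(-Real.sin (k * (y - a)) * k) / k ^ 2 := by
        field_simp
      rw [h2]
      exact h1.cos.neg.div_const (k ^ 2)
    · exact Continuous.intervalIntegrable (by fun_prop) _ _
  · filter_upwards [ae_restrict_mem measurableSet_Icc] with t ht
    refine div_nonneg (Real.sin_nonneg_of_nonneg_of_le_pi ?_ ?_) hk.le
    · exact mul_nonneg hk.le (by linarith [ht.1])
    · nlinarith [ht.2]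

/-- The Wirtinger-type bound on a single cell. -/
lemma lintegral_cell_le {a b k : ℝ} (hk : 0 < k) (hkb : k * (b - a) ≤ Real.pi / 2)
    {v : ℝ → ℝ} (hv : Measurable v) (hv2 : IntegrableOn (fun x => v x ^ 2) (Ioc a b)) :
    ∫⁻ t in Ioo a b, ENNReal.ofReal ((∫ x in a..t, v x) ^ 2) ≤
      ENNReal.ofReal (1 / k ^ 2) * ∫⁻ x in Ioo a b, ENNReal.ofReal (v x ^ 2) := by
  have hpi := Real.pi_pos
  set f : ℝ → ENNReal := fun t => ENNReal.ofReal (Real.sin (k * (t - a)) / k) with hf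
  set g : ℝ → ENNReal := fun x => ENNReal.ofReal (v x ^ 2 / Real.cos (k * (x - a))) with hg
  have hfm : Measurable f := by fun_prop
  have hgm : Measurable g := by
    refine ((hv.pow_const 2).div ?_).ennreal_ofReal
    fun_prop
  -- the kernel of the double integral, supported on `x ≤ t`
  set F : ℝ → ℝ → ENNReal := fun t x => {p : ℝ × ℝ | p.2 ≤ p.1}.indicator
    (fun p => f p.1 * g p.2) (t, x) with hF
  have hFm : Measurable (Function.uncurry F) :=
    ((hfm.comp measurable_fst).mul (hgm.comp measurable_snd)).indicator
      (measurableSet_le measurable_snd measurable_fst)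
  calc ∫⁻ t in Ioo a b, ENNReal.ofReal ((∫ x in a..t, v x) ^ 2)
      ≤ ∫⁻ t in Ioo a b, ∫⁻ x in Ioo a b, F t x := by
        refine setLIntegral_mono' measurableSet_Ioo fun t ht => ?_
        refine (sq_integral_le_s5 hk ht.1 ?_ hv
          (hv2.mono_set (Ioc_subset_Ioc_right ht.2.le))).trans ?_
        · exact (mul_lt_mul_of_pos_left (by linarith [ht.2]) hk).trans_le hkb
        rw [← lintegral_const_mul _ hgm]
        calc ∫⁻ x in Ioc a t, f t * g x = ∫⁻ x in Ioc a t, F t x := by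
              refine setLIntegral_congr_fun measurableSet_Ioc fun x hx => ?_
              simp [hF, Set.indicator, hx.2]
          _ ≤ _ := lintegral_mono_set (Ioc_subset_Ioo_right ht.2)
    _ = ∫⁻ x in Ioo a b, ∫⁻ t in Ioo a b, F t x :=
        lintegral_lintegral_swap hFm.aemeasurable
    _ ≤ ∫⁻ x in Ioo a b, ENNReal.ofReal (1 / k ^ 2) * ENNReal.ofReal (v x ^ 2) := by
        refine setLIntegral_mono' measurableSet_Ioo fun x hx => ?_
        have hc : 0 < Real.cos (k * (x - a)) := by
          refine Real.cos_pos_of_mem_Ioo ⟨?_, ?_⟩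
          · nlinarith [mul_pos hk (sub_pos.2 hx.1)]
          · exact (mul_lt_mul_of_pos_left (by linarith [hx.2]) hk).trans_le hkb
        calc ∫⁻ t in Ioo a b, F t x
            ≤ ∫⁻ t, (Icc x b).indicator (fun t => f t * g x) t := by
              rw [← lintegral_indicator measurableSet_Ioo]
              refine lintegral_mono fun t => ?_
              by_cases h1 : t ∈ Ioo a b <;> by_cases h2 : x ≤ t <;>
                simp [hF, Set.indicator, h1, h2]
              simp [(show t ≤ b from h1.2.le)]
          _ = (∫⁻ t in Icc x b, f t) * g x := by
              rw [lintegral_indicator measurableSet_Icc, lintegral_mul_const _ hfm]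
          _ ≤ ENNReal.ofReal (Real.cos (k * (x - a)) / k ^ 2) * g x := by
              gcongr
              exact lintegral_sin_le hk hx.1.le hx.2.le hkb
          _ = _ := by
              rw [hg, ← ENNReal.ofReal_mul (by positivity), ← ENNReal.ofReal_mul (by positivity)]
              congr 1
              field_simp
    _ = _ := lintegral_const_mul _ (hv.pow_const 2).ennreal_ofReal

/-- Piecewise Wirtinger bound: with `u(t) = ∫_{ψ_l}^t v` on each `[ψ_l, ψ_{l+1})`,
`∫_0^∞ u² ≤ (2h/π)² ∫_0^∞ v²`. -/
theorem stmt5 (ψ : ℕ → ℝ) (hmono : StrictMono ψ) (hψ0 : ψ 0 = 0)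
    (htend : Tendsto ψ atTop atTop)
    (h : ℝ) (hh : 0 < h) (hstep : ∀ l, ψ (l + 1) - ψ l ≤ h)
    (v : ℝ → ℝ) (hv : Measurable v)
    (hv2 : IntegrableOn (fun x => v x ^ 2) (Set.Ioi 0))
    (u : ℝ → ℝ)
    (hu : ∀ l, ∀ t ∈ Set.Ico (ψ l) (ψ (l + 1)), u t = ∫ x in (ψ l)..t, v x) :
    ∫ t in Set.Ioi (0 : ℝ), u t ^ 2 ≤
      (2 * h / Real.pi) ^ 2 * ∫ x in Set.Ioi (0 : ℝ), v x ^ 2 := by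
  have hpi := Real.pi_pos
  have hR : 0 ≤ ∫ x in Set.Ioi (0 : ℝ), v x ^ 2 := integral_nonneg fun x => sq_nonneg _
  -- otherwise the left-hand side is `0` by convention
  by_cases hui : IntegrableOn (fun t => u t ^ 2) (Ioi 0)
  swap
  · rw [integral_undef hui]
    positivity
  rw [← ENNReal.ofReal_le_ofReal_iff (by positivity), ENNReal.ofReal_mul (by positivity),
    ofReal_integral_eq_lintegral_ofReal hui (ae_of_all _ fun x => sq_nonneg _),
    ofReal_integral_eq_lintegral_ofReal hv2 (ae_of_all _ fun x => sq_nonneg _)]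
  have hcells : ⋃ l, Ico (ψ l) (ψ (l + 1)) = Ici 0 := by
    rw [← hψ0]
    exact iUnion_Ico_map_succ_eq_Ici (fun l => hmono.monotone (Nat.zero_le l))
      (not_bddAbove_of_tendsto_atTop htend)
  have hsum : ∀ f : ℝ → ENNReal, ∫⁻ x in Ioi 0, f x = ∑' l, ∫⁻ x in Ioo (ψ l) (ψ (l + 1)), f x := by
    intro f
    have hdisj : Pairwise (Function.onFun Disjoint fun l => Ico (ψ l) (ψ (l + 1))) :=
      hmono.monotone.pairwise_disjoint_on_Ico_succ
    rw [← setLIntegral_congr Ioi_ae_eq_Ici.symm, ← hcells,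
      lintegral_iUnion (fun _ => measurableSet_Ico) hdisj]
    exact tsum_congr fun l => setLIntegral_congr Ioo_ae_eq_Ico.symm
  rw [hsum, hsum, ← ENNReal.tsum_mul_left]
  refine ENNReal.tsum_le_tsum fun l => ?_
  have hk : 0 < Real.pi / (2 * h) := by positivity
  have hkb : Real.pi / (2 * h) * (ψ (l + 1) - ψ l) ≤ Real.pi / 2 :=
    calc _ ≤ Real.pi / (2 * h) * h := mul_le_mul_of_nonneg_left (hstep l) hk.le
      _ = _ := by field_simp
  have hsub : Ioc (ψ l) (ψ (l + 1)) ⊆ Ioi 0 := fun x hx =>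
    (hψ0 ▸ hmono.monotone (Nat.zero_le l)).trans_lt hx.1
  have hconst : (2 * h / Real.pi) ^ 2 = 1 / (Real.pi / (2 * h)) ^ 2 := by field_simp
  rw [hconst]
  refine le_trans (le_of_eq ?_) (lintegral_cell_le hk hkb hv (hv2.mono_set hsub))
  refine setLIntegral_congr_fun measurableSet_Ioo fun t ht => ?_
  simp only [hu l t (Ioo_subset_Ico_self ht)]
end

section
/- Let ψ : ℕ → ℝ be strictly increasing with ψ_0 = 0 and ψ_l → +∞, and let λ : ℕ → ℝ satisfy λ_0 = 0 and ψ_l < λ_{l+1} ≤ ψ_{l+1} for all l. Suppose ψ_{l+1} − ψ_l ≤ h and ψ_l − λ_l ≤ τ♮ for all l, where h > 0 and τ♮ ≥ 0. Then for every measurable v : [0,∞) → ℝ with ∫_0^∞ v(x)² dx < ∞, the following holds: ∑_{l=0}^∞ (ψ_{l+1} − ψ_l) (∫_{λ_l}^{ψ_l} v(x) dx)² ≤ h · τ♮ · ∫_0^∞ v(x)² dx. -/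
open MeasureTheory Filter Set

/-!
By Cauchy–Schwarz, `(∫_{λ_l}^{ψ_l} v)² ≤ (ψ_l - λ_l) ∫_{λ_l}^{ψ_l} v² ≤ τ♮ ∫_{λ_l}^{ψ_l} v²`
(`sq_intervalIntegral_le`), while the weight `ψ_{l+1} - ψ_l` is at most `h`. Since
`ψ_{l-1} < λ_l`, the intervals `(λ_l, ψ_l]` are pairwise disjoint subsets of `(0, ∞)`, so the
integrals of `v²` over them add up to at most `∫_0^∞ v²`. This bounds all partial sums of the
nonnegative series, hence its sum.
-/

/-- Cauchy–Schwarz against the constant function `1` on a bounded interval. -/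
lemma sq_intervalIntegral_le {v : ℝ → ℝ} (hv : Measurable v) {a b : ℝ} (hab : a ≤ b)
    (hv2 : IntegrableOn (fun x => v x ^ 2) (Ioc a b)) :
    (∫ x in a..b, v x) ^ 2 ≤ (b - a) * ∫ x in Ioc a b, v x ^ 2 := by
  rcases hab.eq_or_lt with rfl | hlt
  · simp
  rw [intervalIntegral.integral_of_le hab]
  have hInt : IntegrableOn v (Ioc a b) :=
    ((memLp_two_iff_integrable_sq hv.aestronglyMeasurable).2 hv2).integrable one_le_two
  set I := ∫ x in Ioc a b, v x with hI
  set J := ∫ x in Ioc a b, v x ^ 2 with hJ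
  -- Expand the nonnegative integral of `((b - a) v - I)²`.
  have key : 0 ≤ ∫ x in Ioc a b, ((b - a) * v x - I) ^ 2 :=
    integral_nonneg fun x => sq_nonneg _
  have hexp : ∫ x in Ioc a b, ((b - a) * v x - I) ^ 2
      = (b - a) ^ 2 * J - 2 * (b - a) * I * I + (b - a) * I ^ 2 := by
    have h1 : ∀ x, ((b - a) * v x - I) ^ 2
        = (b - a) ^ 2 * v x ^ 2 - 2 * (b - a) * I * v x + I ^ 2 := fun x => by ring
    simp_rw [h1]
    have hc : IntegrableOn (fun _ : ℝ => I ^ 2) (Ioc a b) :=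
      integrableOn_const measure_Ioc_lt_top.ne
    have h2 : IntegrableOn (fun x => (b - a) ^ 2 * v x ^ 2) (Ioc a b) := hv2.const_mul _
    have h3 : IntegrableOn (fun x => 2 * (b - a) * I * v x) (Ioc a b) := hInt.const_mul _
    have h4 : IntegrableOn (fun x => (b - a) ^ 2 * v x ^ 2 - 2 * (b - a) * I * v x) (Ioc a b) :=
      h2.sub h3
    rw [integral_add h4 hc, integral_sub h2 h3, integral_const_mul,
      integral_const_mul, setIntegral_const]
    simp [hlt.le, hI, hJ]
  rw [hexp] at key
  have hpos : 0 < b - a := sub_pos.2 hlt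
  have : 0 ≤ (b - a) * ((b - a) * J - I ^ 2) := by nlinarith
  linarith [nonneg_of_mul_nonneg_right this hpos]

/-- Held-residual bound:
`∑_l (ψ_{l+1} - ψ_l) (∫_{λ_l}^{ψ_l} v)² ≤ h τ♮ ∫_0^∞ v²`. -/
theorem stmt6 (ψ lam : ℕ → ℝ) (hmono : StrictMono ψ) (hψ0 : ψ 0 = 0)
    (htend : Tendsto ψ atTop atTop)
    (hlam0 : lam 0 = 0)
    (hlam : ∀ l, ψ l < lam (l + 1) ∧ lam (l + 1) ≤ ψ (l + 1))
    (h τn : ℝ) (hh : 0 < h) (hτn : 0 ≤ τn)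
    (hstep : ∀ l, ψ (l + 1) - ψ l ≤ h)
    (hgap : ∀ l, ψ l - lam l ≤ τn)
    (v : ℝ → ℝ) (hv : Measurable v)
    (hv2 : IntegrableOn (fun x => v x ^ 2) (Set.Ioi 0)) :
    ∑' l : ℕ, (ψ (l + 1) - ψ l) * (∫ x in (lam l)..(ψ l), v x) ^ 2 ≤
      h * τn * ∫ x in Set.Ioi (0 : ℝ), v x ^ 2 := by
  have hψnn : ∀ l, 0 ≤ ψ l := fun l => hψ0 ▸ hmono.monotone (Nat.zero_le l)
  have hle : ∀ l, lam l ≤ ψ l := by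
    rintro (_ | l)
    · rw [hlam0, hψ0]
    · exact (hlam l).2
  have hlnn : ∀ l, 0 ≤ lam l := by
    rintro (_ | l)
    · exact hlam0.ge
    · exact (hψnn l).trans (hlam l).1.le
  have hsub : ∀ l, Ioc (lam l) (ψ l) ⊆ Ioi 0 := fun l x hx => (hlnn l).trans_lt hx.1
  have hInt : ∀ l, IntegrableOn (fun x => v x ^ 2) (Ioc (lam l) (ψ l)) :=
    fun l => hv2.mono_set (hsub l)
  have hdisj : Pairwise (Function.onFun Disjoint fun l => Ioc (lam l) (ψ l)) := by
    refine (pairwise_disjoint_on _).2 fun i j hij => ?_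
    obtain ⟨k, rfl⟩ : ∃ k, j = k + 1 := ⟨j - 1, by omega⟩
    refine Set.disjoint_left.2 fun x hx hx' => ?_
    have := hmono.monotone (Nat.lt_succ_iff.1 hij)
    linarith [hx.2, hx'.1, (hlam k).1]
  have hw : ∀ l, 0 ≤ ψ (l + 1) - ψ l := fun l => sub_nonneg.2 (hmono.monotone l.le_succ)
  have hterm : ∀ l, (ψ (l + 1) - ψ l) * (∫ x in (lam l)..(ψ l), v x) ^ 2 ≤
      h * τn * ∫ x in Ioc (lam l) (ψ l), v x ^ 2 := fun l => by
    have hJ : 0 ≤ ∫ x in Ioc (lam l) (ψ l), v x ^ 2 := integral_nonneg fun x => sq_nonneg _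
    rw [mul_assoc]
    refine mul_le_mul (hstep l) ?_ (sq_nonneg _) hh.le
    exact (sq_intervalIntegral_le hv (hle l) (hInt l)).trans
      (mul_le_mul_of_nonneg_right (hgap l) hJ)
  refine Real.tsum_le_of_sum_range_le (fun l => mul_nonneg (hw l) (sq_nonneg _)) fun n => ?_
  refine (Finset.sum_le_sum fun l _ => hterm l).trans ?_
  rw [← Finset.mul_sum, ← integral_biUnion_finset _ (fun _ _ => measurableSet_Ioc)
    (fun i _ j _ hij => hdisj hij) (fun l _ => hInt l)]
  refine mul_le_mul_of_nonneg_left ?_ (mul_nonneg hh.le hτn)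
  exact setIntegral_mono_set hv2 (Eventually.of_forall fun x => sq_nonneg _)
    (iUnion₂_subset fun l _ => hsub l).eventuallyLE
end

section
/- Let T' = (t'_k) and T⋆ = (t⋆_k) be admissible event sequences satisfying the asynchrony bounds with parameters τ', τ⋆, τ°, τ♮, and let Δ be the associated asynchronous sample-and-hold perturbation operator. Then for every v ∈ L²([0,∞)), ⟨Δv, v⟩ + (τ♮/2)‖v‖² ≥ 0; that is, ∫_0^∞ (Δv)(t) v(t) dt ≥ −(τ♮/2) ∫_0^∞ v(t)² dt. -/
/-!
Write `V t = ∫_0^t v`. Between two consecutive hold updates `t⋆_j`, `t⋆_{j+1}` the held sampling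
time is a constant `s_j`, so there `(Δv) v = d/dt [(V - V s_j)² / 2]` almost everywhere. The
argument is a storage-function one: with `I t = ∫_0^t (Δv) v`, the invariant
`(V t⋆_j - V s_j)² / 2 - (τ♮ / 2) ∫_0^{t⋆_j} v² ≤ I t⋆_j` is propagated along the updates
(`storage_invariant`). Between updates the storage and `I` grow by the same amount, so an update at
which the held sample does not change preserves the inequality. When the sample changes, the storage
is reset to `(V t⋆_{j+1} - V s_{j+1})² / 2`; the new sample was taken after `t⋆_j` and is at most
`τ♮` old (`age_le_of_lastIdx_ne`), so by Cauchy–Schwarz this is at most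
`(τ♮ / 2) ∫_{t⋆_j}^{t⋆_{j+1}} v²`, which the second term pays for. Dropping the storage and letting
`j → ∞` gives the claim.
-/

open MeasureTheory Filter Set

namespace Admissible

variable {T : ℕ → ℝ}

lemma strictMono_s7 (hT : Admissible T) : StrictMono T := strictMono_nat_of_lt_succ hT.2.1

lemma nonneg_s7 (hT : Admissible T) (k : ℕ) : 0 ≤ T k := by
  simpa [hT.1] using hT.strictMono_s7.monotone (Nat.zero_le k)

lemma bddAbove_le (hT : Admissible T) (t : ℝ) : BddAbove {k | T k ≤ t} := by
  obtain ⟨N, hN⟩ := (hT.2.2.eventually_gt_atTop t).exists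
  exact ⟨N, fun k hk => (hT.strictMono_s7.lt_iff_lt.1 (lt_of_le_of_lt hk hN)).le⟩

lemma le_lastIdx (hT : Admissible T) {t : ℝ} {k : ℕ} (h : T k ≤ t) : k ≤ lastIdx T t :=
  le_csSup (hT.bddAbove_le t) h

lemma lastIdx_le (hT : Admissible T) {t : ℝ} (h : 0 ≤ t) : T (lastIdx T t) ≤ t :=
  Nat.sSup_mem (s := {k | T k ≤ t}) ⟨0, by simpa [hT.1] using h⟩ (hT.bddAbove_le t)

lemma lastIdx_eq (hT : Admissible T) {t : ℝ} {k : ℕ} (h : T k ≤ t) (h' : t < T (k + 1)) :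
    lastIdx T t = k := by
  refine le_antisymm ?_ (hT.le_lastIdx h)
  have := lt_of_le_of_lt (hT.lastIdx_le ((hT.nonneg_s7 k).trans h)) h'
  exact Nat.lt_succ_iff.1 (hT.strictMono_s7.lt_iff_lt.1 this)

end Admissible

/-- The primitive of an integrable function is absolutely continuous, so the chain rule for its
square integrates. -/
lemma integral_primitive_mul {v : ℝ → ℝ} {s a b : ℝ} (hsa : s ≤ a) (hab : a ≤ b)
    (hv : IntervalIntegrable v volume s b) :
    ∫ t in a..b, (∫ x in s..t, v x) * v t =
      ((∫ x in s..b, v x) ^ 2 - (∫ x in s..a, v x) ^ 2) / 2 := by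
  have hsub : uIcc a b ⊆ uIcc s b := by
    rw [uIcc_of_le hab, uIcc_of_le (hsa.trans hab)]
    exact Icc_subset_Icc_left hsa
  have hF := (hv.absolutelyContinuousOnInterval_intervalIntegral
    (c := s) left_mem_uIcc).mono hsub
  have key := hF.integral_deriv_mul_eq_sub hF
  have hcongr : ∫ t in a..b, (deriv (fun t => ∫ x in s..t, v x) t * (∫ x in s..t, v x)
      + (∫ x in s..t, v x) * deriv (fun t => ∫ x in s..t, v x) t)
      = ∫ t in a..b, 2 * ((∫ x in s..t, v x) * v t) := by
    apply intervalIntegral.integral_congr_ae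
    filter_upwards [hv.ae_hasDerivAt_integral] with t ht htm
    rw [(ht (hsub (uIoc_subset_uIcc htm)) s left_mem_uIcc).deriv]
    ring
  rw [hcongr, intervalIntegral.integral_const_mul] at key
  linarith

lemma sq_integral_le_s7 {v : ℝ → ℝ} {a b : ℝ} (hab : a ≤ b)
    (hv : IntervalIntegrable v volume a b)
    (hv2 : IntervalIntegrable (fun x => v x ^ 2) volume a b) :
    (∫ x in a..b, v x) ^ 2 ≤ (b - a) * ∫ x in a..b, v x ^ 2 := by
  rcases hab.eq_or_lt with rfl | hlt
  · simp
  have hpos : 0 < b - a := sub_pos.2 hlt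
  set A := ∫ x in a..b, v x with hA
  set m := A / (b - a) with hm
  -- The variance of `v` about its mean `m` is nonnegative.
  have h0 : 0 ≤ ∫ x in a..b, (v x - m) ^ 2 :=
    intervalIntegral.integral_nonneg hab fun x _ => sq_nonneg _
  have h1 : ∫ x in a..b, (v x - m) ^ 2
      = (∫ x in a..b, v x ^ 2) - 2 * m * A + (b - a) * m ^ 2 := by
    have : (fun x => (v x - m) ^ 2) = fun x => v x ^ 2 - 2 * m * v x + m ^ 2 := by
      funext x; ring
    rw [this, intervalIntegral.integral_add (hv2.sub (hv.const_mul _)) (by simp),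
      intervalIntegral.integral_sub hv2 (hv.const_mul _),
      intervalIntegral.integral_const_mul, intervalIntegral.integral_const, smul_eq_mul]
  have h2 : m * (b - a) = A := div_mul_cancel₀ _ hpos.ne'
  have h3 : 0 ≤ (b - a) * ((∫ x in a..b, v x ^ 2) - 2 * m * A + (b - a) * m ^ 2) :=
    mul_nonneg hpos.le (h1 ▸ h0)
  have h4 : (b - a) * ((∫ x in a..b, v x ^ 2) - 2 * m * A + (b - a) * m ^ 2)
      = (b - a) * (∫ x in a..b, v x ^ 2) - A ^ 2 := by
    rw [← h2]; ring
  linarith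

/-- If the held sample changes at the update `t⋆_{j+1}`, then the new sample was taken in
`[t⋆_j, t⋆_{j+1}]`, so that `t⋆_{j+1}` is its first subsequent update and the bound `τ♮` applies. -/
lemma age_le_of_lastIdx_ne {Tp Ts : ℕ → ℝ} (hTp : Admissible Tp) (hTs : Admissible Ts) {τn : ℝ}
    (hn : ∀ k, phi Tp Ts k - Tp (lastIdx Tp (phi Tp Ts k)) ≤ τn) {j : ℕ}
    (hne : lastIdx Tp (Ts (j + 1)) ≠ lastIdx Tp (Ts j)) :
    Ts j ≤ Tp (lastIdx Tp (Ts (j + 1))) ∧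
      Ts (j + 1) - Tp (lastIdx Tp (Ts (j + 1))) ≤ τn := by
  have hle : Tp (lastIdx Tp (Ts (j + 1))) ≤ Ts (j + 1) := hTp.lastIdx_le (hTs.nonneg_s7 _)
  have hmono : lastIdx Tp (Ts j) ≤ lastIdx Tp (Ts (j + 1)) :=
    hTp.le_lastIdx ((hTp.lastIdx_le (hTs.nonneg_s7 j)).trans (hTs.2.1 j).le)
  have hlt : Ts j < Tp (lastIdx Tp (Ts (j + 1))) := by
    by_contra! h
    exact hne (le_antisymm (hTp.le_lastIdx h) hmono)
  refine ⟨hlt.le, ?_⟩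
  have hphi : phi Tp Ts (lastIdx Tp (Ts (j + 1))) = Ts (j + 1) := by
    unfold phi
    congr 1
    refine le_antisymm (Nat.sInf_le hle) ?_
    have hmem := Nat.sInf_mem
      (s := {i | Tp (lastIdx Tp (Ts (j + 1))) ≤ Ts i}) ⟨j + 1, hle⟩
    exact hTs.strictMono_s7.lt_iff_lt.1 (hlt.trans_le hmem)
  simpa only [hphi] using hn (lastIdx Tp (Ts (j + 1)))

/-- The stored energy at an update, minus the feedforward supply, is bounded by the energy
`∫_0^{t⋆_j} (Δv) v` delivered so far. -/
lemma storage_invariant {Tp Ts : ℕ → ℝ} (hTp : Admissible Tp) (hTs : Admissible Ts) {τn : ℝ}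
    (hτ : 0 ≤ τn) (hn : ∀ k, phi Tp Ts k - Tp (lastIdx Tp (phi Tp Ts k)) ≤ τn) {v : ℝ → ℝ}
    (hv : ∀ a b, 0 ≤ a → a ≤ b → IntervalIntegrable v volume a b)
    (hv2 : ∀ a b, 0 ≤ a → a ≤ b → IntervalIntegrable (fun x => v x ^ 2) volume a b)
    (hD : ∀ a b, 0 ≤ a → a ≤ b →
      IntervalIntegrable (fun t => Delta Tp Ts v t * v t) volume a b) (j : ℕ) :
    (∫ x in Tp (lastIdx Tp (Ts j))..Ts j, v x) ^ 2 / 2 - τn / 2 * ∫ x in (0 : ℝ)..Ts j, v x ^ 2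
      ≤ ∫ t in (0 : ℝ)..Ts j, Delta Tp Ts v t * v t := by
  induction j with
  | zero =>
    have h : lastIdx Tp 0 = 0 :=
      hTp.lastIdx_eq hTp.1.le (by simpa [hTp.1] using hTp.2.1 0)
    simp [hTs.1, hTp.1, h]
  | succ j ih =>
    have hj0 := hTs.nonneg_s7 j
    have hjj := (hTs.2.1 j).le
    have hs0 := hTp.nonneg_s7 (lastIdx Tp (Ts j))
    have hsj := hTp.lastIdx_le hj0
    have hstep : ∫ t in Ts j..Ts (j + 1), Delta Tp Ts v t * v t =
        ((∫ x in Tp (lastIdx Tp (Ts j))..Ts (j + 1), v x) ^ 2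
          - (∫ x in Tp (lastIdx Tp (Ts j))..Ts j, v x) ^ 2) / 2 := by
      rw [← integral_primitive_mul hsj hjj (hv _ _ hs0 (hsj.trans hjj))]
      -- The right endpoint, where `lastIdx Ts` already equals `j + 1`, is a null set.
      have hnull : ∀ᵐ t : ℝ, t ≠ Ts (j + 1) := by simp [ae_iff, measure_singleton]
      apply intervalIntegral.integral_congr_ae
      filter_upwards [hnull] with t ht htm
      rw [uIoc_of_le hjj] at htm
      rw [Delta, qIdx, hTs.lastIdx_eq htm.1.le (lt_of_le_of_ne htm.2 ht)]
    rw [← intervalIntegral.integral_add_adjacent_intervals (hD 0 _ le_rfl hj0)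
      (hD _ _ hj0 hjj), hstep,
      ← intervalIntegral.integral_add_adjacent_intervals (hv2 0 _ le_rfl hj0) (hv2 _ _ hj0 hjj)]
    have hE : 0 ≤ ∫ x in Ts j..Ts (j + 1), v x ^ 2 :=
      intervalIntegral.integral_nonneg hjj fun x _ => sq_nonneg _
    by_cases hne : lastIdx Tp (Ts (j + 1)) = lastIdx Tp (Ts j)
    · rw [hne]
      nlinarith [mul_nonneg hτ hE]
    · obtain ⟨hlo, hage⟩ := age_le_of_lastIdx_ne hTp hTs hn hne
      have hhi := hTp.lastIdx_le (hTs.nonneg_s7 (j + 1))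
      set s := Tp (lastIdx Tp (Ts (j + 1)))
      have hs : 0 ≤ s := hj0.trans hlo
      have hE' : 0 ≤ ∫ x in s..Ts (j + 1), v x ^ 2 :=
        intervalIntegral.integral_nonneg hhi fun x _ => sq_nonneg _
      have hsplit := intervalIntegral.integral_add_adjacent_intervals
        (hv2 _ _ hj0 hlo) (hv2 _ _ hs hhi)
      have hE'' : 0 ≤ ∫ x in Ts j..s, v x ^ 2 :=
        intervalIntegral.integral_nonneg hlo fun x _ => sq_nonneg _
      have hreset : (∫ x in s..Ts (j + 1), v x) ^ 2
          ≤ τn * ∫ x in Ts j..Ts (j + 1), v x ^ 2 :=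
        calc _ ≤ (Ts (j + 1) - s) * ∫ x in s..Ts (j + 1), v x ^ 2 :=
              sq_integral_le_s7 hhi (hv _ _ hs hhi) (hv2 _ _ hs hhi)
          _ ≤ τn * ∫ x in s..Ts (j + 1), v x ^ 2 := mul_le_mul_of_nonneg_right hage hE'
          _ ≤ _ := mul_le_mul_of_nonneg_left (by linarith) hτ
      linarith [sq_nonneg (∫ x in Tp (lastIdx Tp (Ts j))..Ts (j + 1), v x)]

/-- Input feedforward passivity: `⟨Δv, v⟩ + (τ♮/2)‖v‖² ≥ 0`, i.e.
`∫_0^∞ (Δv)(t) v(t) dt ≥ −(τ♮/2) ∫_0^∞ v(t)² dt`. -/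
theorem stmt7 (Tp Ts : ℕ → ℝ) (hTp : Admissible Tp) (hTs : Admissible Ts)
    (τp τs τc τn : ℝ) (hb : AsyncBounds Tp Ts τp τs τc τn)
    (v : ℝ → ℝ) (hv : Measurable v)
    (hv2 : IntegrableOn (fun x => v x ^ 2) (Set.Ioi 0)) :
    (∫ t in Set.Ioi (0 : ℝ), Delta Tp Ts v t * v t) ≥
      -(τn / 2) * ∫ t in Set.Ioi (0 : ℝ), v t ^ 2 := by
  obtain ⟨-, -, -, -, hτ, -, -, -, -, hn⟩ := hb
  have hV0 : 0 ≤ ∫ t in Set.Ioi (0 : ℝ), v t ^ 2 := integral_nonneg fun t => sq_nonneg _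
  by_cases hint : IntegrableOn (fun t => Delta Tp Ts v t * v t) (Ioi 0)
  -- Without integrability the left-hand side of the theorem has the junk value `0`, and the right-hand side is nonpositive.
  swap
  · rw [integral_undef hint]
    nlinarith [mul_nonneg hτ hV0]
  have hsub : ∀ {a b : ℝ}, 0 ≤ a → Ioc a b ⊆ Ioi 0 := fun ha x hx => lt_of_le_of_lt ha hx.1
  have hii : ∀ {f : ℝ → ℝ}, IntegrableOn f (Ioi 0) → ∀ a b, 0 ≤ a → a ≤ b →
      IntervalIntegrable f volume a b := fun hf a b ha hab =>
    (intervalIntegrable_iff_integrableOn_Ioc_of_le hab).2 (hf.mono_set (hsub ha))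
  have hvi : ∀ a b, 0 ≤ a → a ≤ b → IntervalIntegrable v volume a b := fun a b ha hab => by
    rw [intervalIntegrable_iff_integrableOn_Ioc_of_le hab]
    exact ((memLp_two_iff_integrable_sq hv.aestronglyMeasurable).2
      (hv2.mono_set (hsub ha))).integrable one_le_two
  refine ge_of_tendsto (intervalIntegral_tendsto_integral_Ioi 0 hint hTs.2.2)
    (Eventually.of_forall fun j => ?_)
  have hinv := storage_invariant hTp hTs hτ hn hvi (hii hv2) (hii hint) j
  have hle : ∫ x in (0 : ℝ)..Ts j, v x ^ 2 ≤ ∫ x in Ioi (0 : ℝ), v x ^ 2 := by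
    rw [intervalIntegral.integral_of_le (hTs.nonneg_s7 j)]
    exact setIntegral_mono_set hv2 (ae_of_all _ fun x => sq_nonneg _)
      (hsub le_rfl).eventuallyLE
  nlinarith [mul_le_mul_of_nonneg_left hle hτ,
    sq_nonneg (∫ x in Tp (lastIdx Tp (Ts j))..Ts j, v x)]
end
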